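/- Let φ₁ : L → ℂ be φ₁(x) = exp(iπx²). Then exp(iπx²) is H-periodic on εℤ (exp(iπ(x+H)²) = exp(iπx²) for all x ∈ εℤ), and for every p ∈ L: (Fφ₁)(p) = exp(iπ/4)·conj(φ₁(p)), i.e. Σ_{x∈L} ε·exp(iπx²)·exp(−2πi p x) = exp(iπ/4)·exp(−iπp²). -/

import Mathlib

open Complex Finset

noncomputable section

/-- Balanced representative of `z : ZMod n` in `[-n/2, n/2)`. -/
def bval (n : ℕ) (z : ZMod n) : ℤ :=
  if 2 * (z.val : ℤ) < (n : ℤ) then (z.val : ℤ) else (z.val : ℤ) - (n : ℤ)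

/-- The real lattice point `ε·z ∈ [-H/2, H/2)` of `L` corresponding to `x : ZMod (H^2)`;
subtraction in `ZMod (H^2)` realizes reduction modulo `H` on `L`. -/
def Lpt (H : ℕ) (x : ZMod (H ^ 2)) : ℝ := (bval (H ^ 2) x : ℝ) / H

/-- The infinitesimal Fourier transformation `(Fφ)(p) = Σ_{x∈L} ε·exp(-2πipx)·φ(x)`. -/
def Ftr (H : ℕ) [NeZero H] (φ : ZMod (H ^ 2) → ℂ) (p : ZMod (H ^ 2)) : ℂ :=
  ∑ x : ZMod (H ^ 2),
    (1 / (H : ℂ)) * Complex.exp (-2 * (Real.pi : ℂ) * I * (Lpt H p : ℂ) * (Lpt H x : ℂ)) * φ x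

/-!
Since `exp(iπx²)·exp(-2πipx) = exp(-iπp²)·exp(iπ(x - p)²)`, periodicity reduces the claim to the
quadratic Gauss sum `Σ exp(iπn²/H²)` over `n < H²`. Writing `n = a + Hb` turns the sum over `b` into
a character sum on `ℤ/H`, which vanishes unless `a = H/2`; that surviving term is `H·exp(iπ/4)`.
-/

section FiniteSums

variable {M : Type*} [AddCommMonoid M]

lemma sum_range_mul (f : ℕ → M) (m n : ℕ) :
    ∑ k ∈ range (m * n), f k = ∑ a ∈ range m, ∑ b ∈ range n, f (a + m * b) := by
  rw [sum_comm]
  induction n with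
  | zero => simp
  | succ n ih =>
    rw [mul_add_one, sum_range_add, ih, sum_range_succ]
    simp only [add_comm (m * n)]

lemma sum_zmod_eq_sum_range_cast {N : ℕ} [NeZero N] (g : ZMod N → M) :
    ∑ x, g x = ∑ n ∈ range N, g n := by
  refine sum_nbij' ZMod.val (fun n ↦ (n : ZMod N)) ?_ ?_ ?_ ?_ ?_ <;>
    simp +contextual [ZMod.val_lt, Nat.mod_eq_of_lt]

lemma sum_eq_sum_range_of_periodic {N : ℕ} [NeZero N] {f : ℤ → M} (hf : Function.Periodic f N)
    {t : ZMod N → ℤ} (ht : Function.Bijective fun x ↦ (t x : ZMod N)) :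
    ∑ x, f (t x) = ∑ n ∈ range N, f n := by
  have eq_val (z : ℤ) : f z = f (z : ZMod N).val := by
    rw [ZMod.val_intCast, Int.emod_def, mul_comm]
    exact (hf.sub_int_mul_eq (z / N)).symm
  calc ∑ x, f (t x) = ∑ x, f (t x : ZMod N).val := sum_congr rfl fun x _ ↦ eq_val (t x)
    _ = ∑ y : ZMod N, f y.val := ht.sum_comp fun y : ZMod N ↦ f y.val
    _ = ∑ n ∈ range N, f (n : ZMod N).val := sum_zmod_eq_sum_range_cast _
    _ = ∑ n ∈ range N, f n := sum_congr rfl fun n _ ↦ by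
      simpa only [Int.cast_natCast] using (eq_val n).symm

end FiniteSums

/-- The quadratic phase `z ↦ exp(iπz²/N)` on the integers. For `N = H²` it is the function
`φ₁(x) = exp(iπx²)` read at the lattice point `x = εz`. -/
def chirp (N : ℕ) (z : ℤ) : ℂ := exp (Real.pi * I * (z ^ 2 / N))

lemma exp_pi_mul_I_mul_div_sq (H : ℕ) (z : ℤ) :
    exp (Real.pi * I * (z / H : ℂ) ^ 2) = chirp (H ^ 2) z := by
  rw [chirp, div_pow, Nat.cast_pow]

lemma conj_exp_pi_mul_I_mul_sq (r : ℝ) :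
    starRingEnd ℂ (exp (Real.pi * I * (r : ℂ) ^ 2)) = exp (-(Real.pi : ℂ) * I * (r : ℂ) ^ 2) := by
  simp [← exp_conj]

lemma chirp_periodic {N : ℕ} (hN : Even N) : Function.Periodic (chirp N) N := by
  intro z
  obtain rfl | hN0 := eq_or_ne N 0
  · simp
  have hNC : (N : ℂ) ≠ 0 := Nat.cast_ne_zero.mpr hN0
  obtain ⟨m, hm⟩ := hN
  have hmC : (N : ℂ) = m + m := mod_cast hm
  refine exp_eq_exp_iff_exists_int.mpr ⟨z + m, ?_⟩
  push_cast
  field_simp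
  linear_combination (N : ℂ) * hmC

lemma chirp_sub_mul_conj (N : ℕ) (z w : ℤ) :
    chirp N (z - w) * starRingEnd ℂ (chirp N w) =
      exp (-2 * Real.pi * I * (w * z / N)) * chirp N z := by
  simp only [chirp, ← exp_conj, ← exp_add]
  congr 1
  simp only [Int.cast_sub, map_mul, conj_ofReal, conj_I, map_div₀, map_pow, map_intCast,
    map_natCast]
  ring

/- `b² ≡ b mod 2` replaces `exp(iπb²)` by `exp(iπb)`, which shifts the frequency `a` by `H/2`. -/
lemma chirp_add_mul {H m : ℕ} [NeZero H] (hm : H = m + m) (a b : ℕ) :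
    chirp (H ^ 2) (a + H * b : ℕ) =
      chirp (H ^ 2) a * ZMod.stdAddChar ((b : ZMod H) * ((a + m : ℕ) : ZMod H)) := by
  have hH : (H : ℂ) ≠ 0 := Nat.cast_ne_zero.mpr (NeZero.ne H)
  have hmC : (H : ℂ) = m + m := mod_cast hm
  obtain ⟨c, hc⟩ : Even ((b : ℤ) * (b - 1)) := Int.even_mul_pred_self _
  have hcC : (b : ℂ) * (b - 1) = c + c := mod_cast hc
  have hcast : (b : ZMod H) * ((a + m : ℕ) : ZMod H) = ((b * (a + m) : ℤ) : ZMod H) := by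
    push_cast
    rfl
  rw [hcast, ZMod.stdAddChar_coe, chirp, chirp, ← exp_add]
  refine exp_eq_exp_iff_exists_int.mpr ⟨c, ?_⟩
  push_cast
  field_simp
  linear_combination (H : ℂ) ^ 2 * hcC + b * H * hmC

lemma natCast_add_half_eq_zero_iff {H m a : ℕ} (hm : H = m + m) (ha : a < H) :
    ((a + m : ℕ) : ZMod H) = 0 ↔ a = m := by
  rw [ZMod.natCast_eq_zero_iff]
  constructor
  · intro hdvd
    have : a + m = H := Nat.eq_of_dvd_of_lt_two_mul (by lia) hdvd (by lia)
    lia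
  · rintro rfl
    rw [hm]

lemma sum_chirp_residue_class {H m a : ℕ} (hm : H = m + m) (ha : a < H) :
    ∑ b ∈ range H, chirp (H ^ 2) (a + H * b : ℕ) = if a = m then H * chirp (H ^ 2) m else 0 := by
  have : NeZero H := ⟨by lia⟩
  simp only [chirp_add_mul hm, ← mul_sum]
  rw [← sum_zmod_eq_sum_range_cast fun x : ZMod H ↦ ZMod.stdAddChar (x * ((a + m : ℕ) : ZMod H)),
    AddChar.sum_mulShift _ (ZMod.isPrimitive_stdAddChar H), ZMod.card]
  simp only [natCast_add_half_eq_zero_iff hm ha]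
  split_ifs with h
  · rw [h, mul_comm]
  · simp

lemma chirp_half {H m : ℕ} [NeZero H] (hm : H = m + m) :
    chirp (H ^ 2) m = exp (Real.pi * I / 4) := by
  have hH : (H : ℂ) ≠ 0 := Nat.cast_ne_zero.mpr (NeZero.ne H)
  have hmC : (m : ℂ) = H / 2 := by rw [hm]; push_cast; ring
  rw [chirp, Int.cast_natCast, hmC]
  congr 1
  push_cast
  field_simp
  norm_num

theorem sum_range_chirp_sq {H : ℕ} [NeZero H] (hH : Even H) :
    ∑ n ∈ range (H ^ 2), chirp (H ^ 2) n = H * exp (Real.pi * I / 4) := by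
  obtain ⟨m, hm⟩ := hH
  have hmH : m ∈ range H := mem_range.mpr (by have := NeZero.pos H; lia)
  calc ∑ n ∈ range (H ^ 2), chirp (H ^ 2) n
      = ∑ a ∈ range H, ∑ b ∈ range H, chirp (H ^ 2) (a + H * b : ℕ) := by
        rw [← sum_range_mul (fun n : ℕ ↦ chirp (H ^ 2) n), ← sq]
    _ = ∑ a ∈ range H, if a = m then H * chirp (H ^ 2) m else 0 :=
        sum_congr rfl fun a ha ↦ sum_chirp_residue_class hm (mem_range.mp ha)
    _ = H * exp (Real.pi * I / 4) := by rw [sum_ite_eq', if_pos hmH, chirp_half hm]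

lemma intCast_bval {N : ℕ} [NeZero N] (x : ZMod N) : (bval N x : ZMod N) = x := by
  unfold bval
  split_ifs <;> simp

lemma exp_pi_mul_I_mul_Lpt_sq (H : ℕ) (x : ZMod (H ^ 2)) :
    exp (Real.pi * I * (Lpt H x : ℂ) ^ 2) = chirp (H ^ 2) (bval (H ^ 2) x) := by
  simp [Lpt, ← exp_pi_mul_I_mul_div_sq]

lemma sum_chirp_bval_sub {N : ℕ} [NeZero N] (hN : Even N) (p : ZMod N) :
    ∑ x, chirp N (bval N x - bval N p) = ∑ n ∈ range N, chirp N n := by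
  refine sum_eq_sum_range_of_periodic (chirp_periodic hN) (t := fun x ↦ bval N x - bval N p) ?_
  simp only [Int.cast_sub, intCast_bval]
  exact (Equiv.subRight p).bijective

lemma Ftr_chirp_eq_mul_sum {H : ℕ} [NeZero H] (hH : Even H) (p : ZMod (H ^ 2)) :
    Ftr H (fun x ↦ chirp (H ^ 2) (bval (H ^ 2) x)) p =
      starRingEnd ℂ (chirp (H ^ 2) (bval (H ^ 2) p)) / H *
        ∑ n ∈ range (H ^ 2), chirp (H ^ 2) n := by
  rw [← sum_chirp_bval_sub (hH.pow_of_ne_zero two_ne_zero) p, mul_sum]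
  refine sum_congr rfl fun x _ ↦ ?_
  have phase : -2 * (Real.pi : ℂ) * I * Lpt H p * Lpt H x =
      -2 * Real.pi * I * (bval (H ^ 2) p * bval (H ^ 2) x / (H ^ 2 : ℕ)) := by
    simp only [Lpt]
    push_cast
    ring
  rw [phase, mul_assoc, ← chirp_sub_mul_conj]
  ring

theorem Ftr_chirp {H : ℕ} [NeZero H] (hH : Even H) (p : ZMod (H ^ 2)) :
    Ftr H (fun x ↦ chirp (H ^ 2) (bval (H ^ 2) x)) p =
      exp (Real.pi * I / 4) * starRingEnd ℂ (chirp (H ^ 2) (bval (H ^ 2) p)) := by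
  have hne : (H : ℂ) ≠ 0 := Nat.cast_ne_zero.mpr (NeZero.ne H)
  rw [Ftr_chirp_eq_mul_sum hH, sum_range_chirp_sq hH]
  field_simp

/-- `exp(iπx²)` is `H`-periodic on `εℤ`, and the infinitesimal Fourier
transformation of `φ₁(x) = exp(iπx²)` satisfies `(Fφ₁)(p) = exp(iπ/4)·conj(φ₁(p))
= exp(iπ/4)·exp(−iπp²)`. -/
theorem stmt15 (H : ℕ) [NeZero H] (hH : Even H) :
    (∀ z : ℤ, Complex.exp ((Real.pi : ℂ) * I * ((z : ℂ) / (H : ℂ) + (H : ℂ)) ^ 2) =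
        Complex.exp ((Real.pi : ℂ) * I * ((z : ℂ) / (H : ℂ)) ^ 2)) ∧
    ∀ p : ZMod (H ^ 2),
      Ftr H (fun x => Complex.exp ((Real.pi : ℂ) * I * ((Lpt H x : ℝ) : ℂ) ^ 2)) p =
          Complex.exp ((Real.pi : ℂ) * I / 4) *
            (starRingEnd ℂ) (Complex.exp ((Real.pi : ℂ) * I * ((Lpt H p : ℝ) : ℂ) ^ 2)) ∧
      Ftr H (fun x => Complex.exp ((Real.pi : ℂ) * I * ((Lpt H x : ℝ) : ℂ) ^ 2)) p =
          Complex.exp ((Real.pi : ℂ) * I / 4) *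
            Complex.exp (-(Real.pi : ℂ) * I * ((Lpt H p : ℝ) : ℂ) ^ 2) := by
  have hne : (H : ℂ) ≠ 0 := Nat.cast_ne_zero.mpr (NeZero.ne H)
  constructor
  · intro z
    have shift : (z : ℂ) / H + H = (z + (H ^ 2 : ℕ) : ℤ) / H := by
      push_cast
      field_simp
    rw [shift, exp_pi_mul_I_mul_div_sq, exp_pi_mul_I_mul_div_sq,
      chirp_periodic (hH.pow_of_ne_zero two_ne_zero)]
  · intro p
    simp only [← conj_exp_pi_mul_I_mul_sq, exp_pi_mul_I_mul_Lpt_sq, and_self]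
    exact Ftr_chirp hH p
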